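/- (Complex numbers from completeness.) Let C be a nontrivial monoidal †-category, enriched in commutative monoids, with a simple tensor unit, a zero object, finite †-biproducts and †-equalizers of all parallel pairs. Suppose the self-adjoint scalars are Dedekind-complete: there exists a linear order on the set L = {a : I ⟶ I | a† = a} (which is closed under addition and composition) such that a ≤ b implies a + c ≤ b + c, 0 ≤ a and 0 ≤ b imply 0 ≤ a ≫ b, every nonempty subset of L with an upper bound has a least upper bound, every nonempty subset with a lower bound has a greatest lower bound, and these bounds commute with translation: sup{x + r | x ∈ X} = (sup X) + r and inf{x + r | x ∈ X} = (inf X) + r. Then the scalars have an involution-preserving embedding into the complex numbers: there is an injective map φ : (I ⟶ I) → ℂ preserving 0, 1, addition and multiplication, with φ(a†) = conj(φ a) for all scalars a. -/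

import Mathlib

/-!
The scalars form a commutative semiring `S` by the Eckmann–Hilton argument, and the †-structure
controls its ring of differences `R`. Projections onto †-equalizers of maps out of `A ⊕ A` are
self-adjoint idempotent `2 × 2` matrices; comparing entries shows that addition is cancellative
(`add_cancel_hom`), that `2` is invertible (`exists_half`) and, using simplicity of the unit, that
`R` is a domain (`scalar_domain`).

Let `L` be the ordered semiring of self-adjoint scalars. Completeness and translation of bounds
make `L` archimedean and give it differences `b - a` for `a ≤ b`, as soon as it has a positive
element. If it has none, the order is replaced by its dual, and the compatibility of the new order
with multiplication is automatic. Hölder's theorem embeds the additive group of differences of `L`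
into `ℝ`; by halving and completeness the image contains all nonnegative reals, and the embedding
normalized at `1` is multiplicative (`TranslationComplete.exists_ringHom_real`). Hence the fixed
ring of the involution on `R` is a copy of `ℝ`.

Each `r` in `R` is a root of the real polynomial `X² - (r + r†) X + r r†`, so `R` is a domain
algebraic over `ℝ` and maps to `ℂ`. The images of `r` and `r†` have real sum and real product, so
they are conjugate unless both are real, in which case `r` is itself self-adjoint
(`exists_embedding_complex`).
-/

open CategoryTheory CategoryTheory.Limits CategoryTheory.MonoidalCategory

universe v u

/-- A †-category structure: a contravariant, identity-on-objects, involutive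
assignment of morphisms. -/
structure DaggerData (C : Type u) [Category.{v} C] where
  dag : ∀ {A B : C}, (A ⟶ B) → (B ⟶ A)
  dag_id : ∀ A : C, dag (𝟙 A) = 𝟙 A
  dag_comp : ∀ {A B E : C} (f : A ⟶ B) (g : B ⟶ E), dag (f ≫ g) = dag g ≫ dag f
  dag_dag : ∀ {A B : C} (f : A ⟶ B), dag (dag f) = f

/-- Enrichment in commutative monoids: composition is bilinear and
zero morphisms are absorbing. -/
structure CMonEnriched (C : Type u) [Category.{v} C]
    [∀ X Y : C, AddCommMonoid (X ⟶ Y)] : Prop where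
  comp_add : ∀ {X Y Z : C} (f : X ⟶ Y) (g h : Y ⟶ Z), f ≫ (g + h) = f ≫ g + f ≫ h
  add_comp : ∀ {X Y Z : C} (f g : X ⟶ Y) (h : Y ⟶ Z), (f + g) ≫ h = f ≫ h + g ≫ h
  comp_zero : ∀ {X Y Z : C} (f : X ⟶ Y), f ≫ (0 : Y ⟶ Z) = 0
  zero_comp : ∀ {X Y Z : C} (f : Y ⟶ Z), (0 : X ⟶ Y) ≫ f = 0

/-- Existence of finite †-biproducts. -/
def HasFiniteDagBiproducts {C : Type u} [Category.{v} C]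
    [∀ X Y : C, AddCommMonoid (X ⟶ Y)] (D : DaggerData C) : Prop :=
  ∀ (n : ℕ) (A : Fin n → C), ∃ (P : C) (i : ∀ k, A k ⟶ P),
    (∀ k, i k ≫ D.dag (i k) = 𝟙 (A k)) ∧
    (∀ k j, k ≠ j → i k ≫ D.dag (i j) = 0) ∧
    ∑ k, D.dag (i k) ≫ i k = 𝟙 P

/-- Existence of †-equalizers of all parallel pairs: equalizers that are isometries. -/
def HasDagEqualizers {C : Type u} [Category.{v} C] (D : DaggerData C) : Prop :=
  ∀ {X Y : C} (u v : X ⟶ Y), ∃ (E : C) (e : E ⟶ X),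
    e ≫ u = e ≫ v ∧ e ≫ D.dag e = 𝟙 E ∧
    ∀ {W : C} (w : W ⟶ X), w ≫ u = w ≫ v → ∃! t : W ⟶ E, t ≫ e = w

/-- `s` is a least upper bound of `X` among the elements satisfying `SA`,
with respect to the relation `le`. -/
def IsSupRel {α : Type*} (SA : α → Prop) (le : α → α → Prop)
    (X : Set α) (s : α) : Prop :=
  SA s ∧ (∀ x ∈ X, le x s) ∧ ∀ b, SA b → (∀ x ∈ X, le x b) → le s b

/-- `s` is a greatest lower bound of `X` among the elements satisfying `SA`,
with respect to the relation `le`. -/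
def IsInfRel {α : Type*} (SA : α → Prop) (le : α → α → Prop)
    (X : Set α) (s : α) : Prop :=
  SA s ∧ (∀ x ∈ X, le s x) ∧ ∀ b, SA b → (∀ x ∈ X, le b x) → le b s

/-! ### Scalars of a †-category -/

section Category

variable {C : Type u} [Category.{v} C] [∀ X Y : C, AddCommMonoid (X ⟶ Y)]

/-- The binary case of the existence of finite †-biproducts. -/
theorem exists_dag_biprod {D : DaggerData C} (hbp : HasFiniteDagBiproducts D) (A : C) :
    ∃ (P : C) (i j : A ⟶ P), i ≫ D.dag i = 𝟙 A ∧ j ≫ D.dag j = 𝟙 A ∧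
      i ≫ D.dag j = 0 ∧ j ≫ D.dag i = 0 ∧ D.dag i ≫ i + D.dag j ≫ j = 𝟙 P := by
  obtain ⟨P, i, h1, h2, h3⟩ := hbp 2 (fun _ => A)
  exact ⟨P, i 0, i 1, h1 0, h1 1, h2 0 1 (by decide), h2 1 0 (by decide),
    by simpa [Fin.sum_univ_two] using h3⟩

/-- The dagger is additive, although this is not part of the definition: it swaps the
injections and the projections of a †-biproduct, through which sums are expressed. -/
theorem dag_add {D : DaggerData C} (En : CMonEnriched C) (hbp : HasFiniteDagBiproducts D)
    {A B : C} (f g : A ⟶ B) : D.dag (f + g) = D.dag f + D.dag g := by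
  obtain ⟨P, i, j, hii, hjj, hij, hji, hsum⟩ := exists_dag_biprod hbp A
  have hdiag : D.dag (i + j) = D.dag i + D.dag j := by
    have h1 : i ≫ D.dag (i + j) = 𝟙 A := by
      have : (i + j) ≫ D.dag i = 𝟙 A := by rw [En.add_comp, hii, hji, add_zero]
      have := congrArg D.dag this
      rwa [D.dag_comp, D.dag_dag, D.dag_id] at this
    have h2 : j ≫ D.dag (i + j) = 𝟙 A := by
      have : (i + j) ≫ D.dag j = 𝟙 A := by rw [En.add_comp, hjj, hij, zero_add]
      have := congrArg D.dag this
      rwa [D.dag_comp, D.dag_dag, D.dag_id] at this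
    rw [← Category.id_comp (D.dag (i + j)), ← hsum, En.add_comp, Category.assoc, Category.assoc,
      h1, h2, Category.comp_id, Category.comp_id]
  -- the copairing of `f` and `g`
  let h : P ⟶ B := D.dag i ≫ f + D.dag j ≫ g
  have hi : i ≫ h = f := by
    simp only [h, En.comp_add, ← Category.assoc, hii, hij, En.zero_comp, Category.id_comp,
      add_zero]
  have hj : j ≫ h = g := by
    simp only [h, En.comp_add, ← Category.assoc, hjj, hji, En.zero_comp, Category.id_comp,
      zero_add]
  have hfg : f + g = (i + j) ≫ h := by rw [En.add_comp, hi, hj]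
  rw [hfg, D.dag_comp, hdiag, En.comp_add, ← D.dag_comp, ← D.dag_comp, hi, hj]

theorem dag_zero [HasZeroObject C] {D : DaggerData C} (En : CMonEnriched C) (A B : C) :
    D.dag (0 : A ⟶ B) = 0 := by
  obtain ⟨Z, hZ⟩ := HasZeroObject.zero (C := C)
  have h0 : (0 : A ⟶ B) = (0 : A ⟶ Z) ≫ (0 : Z ⟶ B) := (En.zero_comp _).symm
  rw [h0, D.dag_comp, hZ.eq_of_tgt (D.dag (0 : Z ⟶ B)) 0, En.zero_comp]

/-- Addition of morphisms is cancellative. The pair `[f, h], [g, h]` out of `A ⊕ A` is equalized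
by the second injection and by the diagonal, so the projection `p = e† e` onto its †-equalizer
fixes both; being self-adjoint, `p` has no off-diagonal entries, so it is the identity. -/
theorem add_cancel_hom [HasZeroObject C] {D : DaggerData C} (En : CMonEnriched C)
    (hbp : HasFiniteDagBiproducts D) (heq : HasDagEqualizers D) {A B : C} (f g h : A ⟶ B)
    (hfg : f + h = g + h) : f = g := by
  obtain ⟨P, i, j, hii, hjj, hij, hji, hsum⟩ := exists_dag_biprod hbp A
  let u : P ⟶ B := D.dag i ≫ f + D.dag j ≫ h
  let v : P ⟶ B := D.dag i ≫ g + D.dag j ≫ h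
  have hiu : i ≫ u = f := by
    simp only [u, En.comp_add, ← Category.assoc, hii, hij, En.zero_comp, Category.id_comp,
      add_zero]
  have hju : j ≫ u = h := by
    simp only [u, En.comp_add, ← Category.assoc, hjj, hji, En.zero_comp, Category.id_comp,
      zero_add]
  have hiv : i ≫ v = g := by
    simp only [v, En.comp_add, ← Category.assoc, hii, hij, En.zero_comp, Category.id_comp,
      add_zero]
  have hjv : j ≫ v = h := by
    simp only [v, En.comp_add, ← Category.assoc, hjj, hji, En.zero_comp, Category.id_comp,
      zero_add]
  obtain ⟨E, e, he, hee, hu⟩ := heq u v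
  have hfix : ∀ w : A ⟶ P, w ≫ u = w ≫ v → w ≫ D.dag e ≫ e = w := by
    intro w hw
    obtain ⟨t, ht, -⟩ := hu w hw
    rw [← ht, Category.assoc, ← Category.assoc e, hee, Category.id_comp]
  have hpsa : D.dag (D.dag e ≫ e) = D.dag e ≫ e := by rw [D.dag_comp, D.dag_dag]
  have hpu : (D.dag e ≫ e) ≫ u = (D.dag e ≫ e) ≫ v := by simp only [Category.assoc, he]
  have hj' := hfix j (by rw [hju, hjv])
  have hd' := hfix (i + j) (by rw [En.add_comp, En.add_comp, hiu, hju, hiv, hjv, hfg])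
  generalize D.dag e ≫ e = p at *
  rw [En.add_comp, hj'] at hd'
  have h1 : i ≫ p ≫ D.dag i = 𝟙 A := by
    have := congrArg (· ≫ D.dag i) hd'
    simpa only [En.add_comp, hii, hji, add_zero, Category.assoc] using this
  have h2 : i ≫ p ≫ D.dag j = 0 := by
    have := congrArg D.dag (congrArg (· ≫ D.dag i) hj')
    simpa only [D.dag_comp, D.dag_dag, hpsa, hji, dag_zero En] using this
  have hip : i ≫ p = i := by
    rw [← Category.comp_id (i ≫ p), ← hsum, En.comp_add]
    simp only [← Category.assoc] at h1 h2 ⊢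
    rw [h1, h2, En.zero_comp, add_zero, Category.id_comp]
  rw [← hiu, ← hiv, ← hip, Category.assoc, Category.assoc, hpu]

/-- Normalizing the diagonal vector of `A ⊕ A` makes `2` invertible. -/
theorem exists_half {D : DaggerData C} (En : CMonEnriched C)
    (hbp : HasFiniteDagBiproducts D) (heq : HasDagEqualizers D) (A : C) :
    ∃ x : A ⟶ A, x + x = 𝟙 A := by
  obtain ⟨P, i, j, hii, hjj, hij, hji, hsum⟩ := exists_dag_biprod hbp A
  obtain ⟨E, e, he, hee, hu⟩ := heq (D.dag i) (D.dag j)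
  obtain ⟨t, ht, -⟩ := hu (i + j) (by
    rw [En.add_comp, En.add_comp, hii, hjj, hij, hji, add_comm])
  obtain ⟨x, hx⟩ : ∃ x, e ≫ D.dag i = x := ⟨_, rfl⟩
  have hx' : e ≫ D.dag j = x := he ▸ hx
  have hxi : i ≫ D.dag e = D.dag x := by rw [← hx, D.dag_comp, D.dag_dag]
  have hxj : j ≫ D.dag e = D.dag x := by rw [← hx', D.dag_comp, D.dag_dag]
  have hexp : e = x ≫ i + x ≫ j := by
    calc e = e ≫ (D.dag i ≫ i + D.dag j ≫ j) := by rw [hsum, Category.comp_id]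
      _ = x ≫ i + x ≫ j := by
        rw [En.comp_add, ← Category.assoc, ← Category.assoc, hx, hx']
  have hone : x ≫ D.dag x + x ≫ D.dag x = 𝟙 E := by
    calc x ≫ D.dag x + x ≫ D.dag x = (x ≫ i + x ≫ j) ≫ D.dag e := by
          rw [En.add_comp, Category.assoc, Category.assoc, hxi, hxj]
      _ = 𝟙 E := by rw [← hexp, hee]
  have htx : t ≫ x = 𝟙 A := by
    rw [← hx, ← Category.assoc, ht, En.add_comp, hii, hji, add_zero]
  refine ⟨D.dag x ≫ x, ?_⟩
  calc D.dag x ≫ x + D.dag x ≫ x = t ≫ (x ≫ D.dag x + x ≫ D.dag x) ≫ x := by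
        simp only [En.add_comp, En.comp_add, Category.assoc]
        simp only [← Category.assoc, htx, Category.id_comp]
    _ = 𝟙 A := by rw [hone, Category.id_comp, htx]

theorem scalar_comm {C : Type u} [Category.{v} C] [MonoidalCategory C] (a b : 𝟙_ C ⟶ 𝟙_ C) :
    a ≫ b = b ≫ a := by
  have ha : a = (λ_ (𝟙_ C)).inv ≫ (𝟙_ C ◁ a) ≫ (λ_ (𝟙_ C)).hom := by simp
  have hb : b = (λ_ (𝟙_ C)).inv ≫ (b ▷ 𝟙_ C) ≫ (λ_ (𝟙_ C)).hom := by
    rw [unitors_equal, unitors_inv_equal]; simp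
  rw [ha, hb]
  simp only [Category.assoc, Iso.hom_inv_id_assoc]
  rw [whisker_exchange_assoc]

variable [MonoidalCategory C]

/-- Scalars can be cancelled multiplicatively, since the equalizer of two distinct scalars is a
proper subobject of the simple unit. -/
theorem scalar_mul_cancel {D : DaggerData C} (En : CMonEnriched C) (heq : HasDagEqualizers D)
    (hsimple : ∀ {X : C} (m : X ⟶ 𝟙_ C), Mono m → m = 0 ∨ IsIso m)
    (a b c : 𝟙_ C ⟶ 𝟙_ C) (h : a ≫ b = a ≫ c) : a = 0 ∨ b = c := by
  obtain ⟨E, e, he, hee, hu⟩ := heq b c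
  have hmono : Mono e := ⟨fun s t hst => by
    have := congrArg (· ≫ D.dag e) hst
    simpa only [Category.assoc, hee, Category.comp_id] using this⟩
  rcases hsimple e hmono with h0 | hiso
  · obtain ⟨t, ht, -⟩ := hu a h
    exact Or.inl (by rw [← ht, h0, En.comp_zero])
  · exact Or.inr ((cancel_epi e).mp he)

/-- The difference ring of the scalars is a domain: this is `(a - c)(b - d) = 0` written without
subtraction. The vectors `(b, d)` and `(1, 1)` lie in the †-equalizer of `[a, c]` and `[c, a]`,
and the projection onto it has the form `[[x, y], [y, x]]` with `x + y = 1`. -/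
theorem scalar_domain [HasZeroObject C] {D : DaggerData C} (En : CMonEnriched C)
    (hbp : HasFiniteDagBiproducts D) (heq : HasDagEqualizers D)
    (hsimple : ∀ {X : C} (m : X ⟶ 𝟙_ C), Mono m → m = 0 ∨ IsIso m)
    (a b c d : 𝟙_ C ⟶ 𝟙_ C) (h : b ≫ a + d ≫ c = b ≫ c + d ≫ a) : a = c ∨ b = d := by
  obtain ⟨P, i, j, hii, hjj, hij, hji, hsum⟩ := exists_dag_biprod hbp (𝟙_ C)
  let u : P ⟶ 𝟙_ C := D.dag i ≫ a + D.dag j ≫ c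
  let v : P ⟶ 𝟙_ C := D.dag i ≫ c + D.dag j ≫ a
  have hiu : i ≫ u = a := by
    simp only [u, En.comp_add, ← Category.assoc, hii, hij, En.zero_comp, Category.id_comp,
      add_zero]
  have hju : j ≫ u = c := by
    simp only [u, En.comp_add, ← Category.assoc, hjj, hji, En.zero_comp, Category.id_comp,
      zero_add]
  have hiv : i ≫ v = c := by
    simp only [v, En.comp_add, ← Category.assoc, hii, hij, En.zero_comp, Category.id_comp,
      add_zero]
  have hjv : j ≫ v = a := by
    simp only [v, En.comp_add, ← Category.assoc, hjj, hji, En.zero_comp, Category.id_comp,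
      zero_add]
  obtain ⟨E, e, he, hee, hu⟩ := heq u v
  have hfix : ∀ w : 𝟙_ C ⟶ P, w ≫ u = w ≫ v → w ≫ D.dag e ≫ e = w := by
    intro w hw
    obtain ⟨t, ht, -⟩ := hu w hw
    rw [← ht, Category.assoc, ← Category.assoc e, hee, Category.id_comp]
  have hpsa : D.dag (D.dag e ≫ e) = D.dag e ≫ e := by rw [D.dag_comp, D.dag_dag]
  have hpu : (D.dag e ≫ e) ≫ u = (D.dag e ≫ e) ≫ v := by simp only [Category.assoc, he]
  have h11 := hfix (i + j) (by
    rw [En.add_comp, En.add_comp, hiu, hju, hiv, hjv, add_comm])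
  have hbd := hfix (b ≫ i + d ≫ j) (by
    simp only [En.add_comp, Category.assoc, hiu, hju, hiv, hjv, h])
  generalize D.dag e ≫ e = p at *
  obtain ⟨x, hx⟩ : ∃ x, i ≫ p ≫ D.dag i = x := ⟨_, rfl⟩
  obtain ⟨y, hy⟩ : ∃ y, j ≫ p ≫ D.dag i = y := ⟨_, rfl⟩
  have hxsa : D.dag x = x := by
    rw [← hx]; simp only [D.dag_comp, D.dag_dag, hpsa, Category.assoc]
  have hxy : x + y = 𝟙 _ := by
    have := congrArg (· ≫ D.dag i) h11
    simpa only [En.add_comp, hii, hji, add_zero, Category.assoc, hx, hy] using this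
  have hbe : b ≫ x + d ≫ y = b := by
    have := congrArg (· ≫ D.dag i) hbd
    simpa only [En.add_comp, hii, hji, add_zero, Category.assoc, hx, hy, En.comp_zero,
      Category.comp_id] using this
  have hyd : y ≫ d = y ≫ b := by
    rw [scalar_comm y d, scalar_comm y b]
    refine add_cancel_hom En hbp heq _ _ (b ≫ x) ?_
    rw [add_comm, hbe, ← En.comp_add, add_comm y x, hxy, Category.comp_id]
  rcases scalar_mul_cancel En heq hsimple y d b hyd with hy0 | hdb
  · left
    rw [hy0, add_zero] at hxy
    have hij' : i ≫ p ≫ D.dag j = 0 := by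
      have := congrArg D.dag hy
      simpa only [D.dag_comp, D.dag_dag, hpsa, hy0, dag_zero En, Category.assoc] using this
    have hip : i ≫ p = i := by
      rw [← Category.comp_id (i ≫ p), ← hsum, En.comp_add]
      rw [hxy] at hx
      simp only [← Category.assoc] at hx hij' ⊢
      rw [hx, hij', En.zero_comp, add_zero, Category.id_comp]
    rw [← hiu, ← hiv, ← hip, Category.assoc, Category.assoc, hpu]
  · exact Or.inr hdb.symm

end Category

/-! ### Complete ordered semirings -/

section OrderedSemiring

/-- Dedekind completeness of an ordered additive monoid, with bounds compatible with translation. -/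
structure TranslationComplete (L : Type*) [AddCommMonoid L] [LinearOrder L] : Prop where
  sup : ∀ X : Set L, X.Nonempty → BddAbove X → ∃ s, IsLUB X s
  inf : ∀ X : Set L, X.Nonempty → BddBelow X → ∃ s, IsGLB X s
  sup_add : ∀ (X : Set L) (r s : L), IsLUB X s → IsLUB ((fun x => x + r) '' X) (s + r)
  inf_add : ∀ (X : Set L) (r s : L), IsGLB X s → IsGLB ((fun x => x + r) '' X) (s + r)

variable {L : Type*} [AddCommMonoid L] [LinearOrder L]

theorem TranslationComplete.dual (h : TranslationComplete L) : TranslationComplete Lᵒᵈ :=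
  ⟨h.inf, h.sup, h.inf_add, h.sup_add⟩

variable [IsOrderedCancelAddMonoid L]

/-- The supremum `s` of the `a + nδ` would satisfy `s + δ ≤ s`. -/
theorem TranslationComplete.archimedean (h : TranslationComplete L) {δ : L} (hδ : 0 < δ)
    (a b : L) : ∃ n : ℕ, b ≤ a + n • δ := by
  by_contra! hcon
  obtain ⟨s, hs⟩ := h.sup (Set.range fun n : ℕ => a + n • δ) ⟨_, 0, rfl⟩
    ⟨b, by rintro _ ⟨n, rfl⟩; exact (hcon n).le⟩
  have h1 := h.sup_add _ δ s hs
  have h2 : s + δ ≤ s := h1.2 (by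
    rintro _ ⟨_, ⟨n, rfl⟩, rfl⟩
    refine hs.1 ⟨n + 1, ?_⟩
    simp only [succ_nsmul, add_assoc])
  exact absurd h2 (not_le.mpr (lt_add_of_pos_right s hδ))

/-- The infimum of the positive elements is `0`, and this can be translated. -/
theorem TranslationComplete.exists_pos_add_lt (h : TranslationComplete L)
    (hhalf : ∀ a : L, ∃ b, b + b = a) {δ : L} (hδ : 0 < δ) {a b : L} (hab : a < b) :
    ∃ x, 0 < x ∧ a + x < b := by
  obtain ⟨s, hs⟩ := h.inf {x | 0 < x} ⟨δ, hδ⟩ ⟨0, fun x hx => le_of_lt hx⟩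
  have hs0 : s = 0 := by
    refine le_antisymm ?_ (hs.2 fun x hx => le_of_lt hx)
    by_contra! hpos
    obtain ⟨t, rfl⟩ := hhalf s
    have ht : 0 < t := by
      by_contra! ht
      exact absurd hpos (not_lt.mpr (add_nonpos ht ht))
    exact absurd (hs.1 ht) (not_le.mpr (lt_add_of_pos_right t ht))
  rw [hs0] at hs
  have h1 := h.inf_add _ a 0 hs
  rw [zero_add] at h1
  by_contra! hcon
  refine absurd (h1.2 (?_ : b ∈ _)) (not_le.mpr hab)
  rintro _ ⟨x, hx, rfl⟩
  simpa only [add_comm a] using hcon x hx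

/-- The difference `b - a` is found as the supremum of the `c` with `a + c ≤ b`. -/
theorem TranslationComplete.exists_add_eq (h : TranslationComplete L)
    (hhalf : ∀ a : L, ∃ b, b + b = a) {δ : L} (hδ : 0 < δ) {a b : L} (hab : a ≤ b) :
    ∃ c, a + c = b := by
  obtain ⟨n, hn⟩ := h.archimedean hδ a b
  obtain ⟨s, hs⟩ := h.sup {c | a + c ≤ b} ⟨0, by simpa using hab⟩
    ⟨n • δ, fun c hc => le_of_add_le_add_left (le_trans hc hn)⟩
  have h1 : s + a ≤ b := (h.sup_add _ a s hs).2 (by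
    rintro _ ⟨c, hc, rfl⟩
    simpa only [add_comm a] using (show a + c ≤ b from hc))
  refine ⟨s, le_antisymm (by rwa [add_comm]) ?_⟩
  by_contra! hlt
  obtain ⟨x, hx, hxb⟩ := h.exists_pos_add_lt hhalf hδ hlt
  have : s + x ≤ s := hs.1 (show a + (s + x) ≤ b by rw [← add_assoc]; exact hxb.le)
  exact absurd this (not_le.mpr (lt_add_of_pos_right s hx))

open Algebra in
/-- Hölder's theorem, applied to the ordered group of differences of `L`. -/
theorem TranslationComplete.exists_strictMono (h : TranslationComplete L)
    (hhalf : ∀ a : L, ∃ b, b + b = a) {δ : L} (hδ : 0 < δ) :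
    ∃ g : L →+ ℝ, StrictMono g := by
  have hof : StrictMono (GrothendieckAddGroup.of (M := L)) := by
    intro a b hab
    change AddLocalization.mk a 0 < AddLocalization.mk b 0
    rw [AddLocalization.mk_lt_mk]
    simpa using hab
  have hdiff : ∀ x : GrothendieckAddGroup L, ∃ a b : L,
      x = GrothendieckAddGroup.of a - GrothendieckAddGroup.of b := by
    intro x
    induction x using AddLocalization.ind with
    | _ y =>
    obtain ⟨a, b, -⟩ := y
    refine ⟨a, b, ?_⟩
    change _ = AddLocalization.mk a 0 - AddLocalization.mk b 0
    rw [GrothendieckAddGroup.mk_sub_mk]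
    simp
  have : Archimedean (GrothendieckAddGroup L) := ⟨fun x y hy => by
    obtain ⟨a, b, rfl⟩ := hdiff x
    obtain ⟨c, d, rfl⟩ := hdiff y
    rw [sub_pos, hof.lt_iff_lt] at hy
    obtain ⟨e, rfl⟩ := h.exists_add_eq hhalf hδ hy.le
    have he : 0 < e := by simpa using hy
    obtain ⟨n, hn⟩ := h.archimedean he b a
    refine ⟨n, ?_⟩
    rw [map_add, add_sub_cancel_left, sub_le_iff_le_add', ← map_nsmul, ← map_add]
    exact hof.monotone hn⟩
  obtain ⟨f, hf⟩ := Archimedean.exists_orderAddMonoidHom_real_injective (GrothendieckAddGroup L)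
  refine ⟨(f : GrothendieckAddGroup L →+ ℝ).comp GrothendieckAddGroup.of, ?_⟩
  exact ((OrderHomClass.mono f).strictMono_of_injective hf).comp hof

theorem TranslationComplete.exists_eq_of_nonneg (h : TranslationComplete L)
    (hhalf : ∀ a : L, ∃ b, b + b = a) {δ : L} (hδ : 0 < δ) (g : L →+ ℝ) (hg : StrictMono g)
    {y : ℝ} (hy : 0 ≤ y) : ∃ a, g a = y := by
  have hg0 : ∀ {x}, 0 < x → 0 < g x := fun {x} hx => by simpa using hg hx
  -- halving `δ` repeatedly gives positive elements of arbitrarily small value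
  have hsmall : ∀ ε : ℝ, 0 < ε → ∃ x, 0 < x ∧ g x < ε := by
    have hpow : ∀ n : ℕ, ∃ x, 0 < x ∧ g x = g δ / 2 ^ n := by
      intro n
      induction n with
      | zero => exact ⟨δ, hδ, by simp⟩
      | succ n ih =>
        obtain ⟨x, hx, hgx⟩ := ih
        obtain ⟨t, rfl⟩ := hhalf x
        refine ⟨t, ?_, ?_⟩
        · by_contra! ht
          exact absurd hx (not_lt.mpr (add_nonpos ht ht))
        · rw [map_add] at hgx
          rw [pow_succ, ← div_div, ← hgx]; ring
    intro ε hε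
    obtain ⟨n, hn⟩ := exists_pow_lt_of_lt_one (div_pos hε (hg0 hδ)) (by norm_num : (1 / 2 : ℝ) < 1)
    obtain ⟨x, hx, hgx⟩ := hpow n
    refine ⟨x, hx, ?_⟩
    rw [hgx]
    rw [lt_div_iff₀ (hg0 hδ)] at hn
    calc g δ / 2 ^ n = (1 / 2) ^ n * g δ := by rw [one_div, inv_pow]; ring
      _ < ε := hn
  obtain ⟨n, hn⟩ := Archimedean.arch y (hg0 hδ)
  obtain ⟨s, hs⟩ := h.sup {c | g c ≤ y} ⟨0, by simpa using hy⟩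
    ⟨n • δ, fun c hc => hg.le_iff_le.mp (by rw [map_nsmul]; exact le_trans hc hn)⟩
  have hs0 : 0 ≤ s := hs.1 (show g 0 ≤ y by simpa using hy)
  refine ⟨s, le_antisymm ?_ ?_⟩
  · by_contra! hlt
    obtain ⟨x, hx, hxs⟩ := hsmall (g s - y) (by linarith)
    obtain ⟨c, rfl⟩ := h.exists_add_eq hhalf hδ (hg.lt_iff_lt.mp (by linarith : g x < g s)).le
    rw [map_add] at hxs
    have : x + c ≤ c := hs.2 fun d hd => hg.le_iff_le.mp (by
      have : g d ≤ y := hd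
      linarith)
    exact absurd this (not_le.mpr (lt_add_of_pos_left c hx))
  · by_contra! hlt
    obtain ⟨x, hx, hxs⟩ := hsmall (y - g s) (by linarith)
    have : s + x ≤ s := hs.1 (show g (s + x) ≤ y by rw [map_add]; linarith)
    exact absurd this (not_le.mpr (lt_add_of_pos_right s hx))

/-- The case `0 < 1` of `TranslationComplete.exists_ringHom_real`. Multiplication by a nonnegative
element is monotone because differences exist, so the additive embedding into `ℝ`, once normalized,
is multiplicative by comparison with integer multiples of `1`. -/
theorem TranslationComplete.exists_ringHom_real_of_one_pos {L : Type*} [CommSemiring L]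
    [LinearOrder L] [IsOrderedCancelAddMonoid L] (h : TranslationComplete L)
    (hhalf : ∀ a : L, ∃ b, b + b = a) (hmul : ∀ a b : L, 0 ≤ a → 0 ≤ b → 0 ≤ a * b)
    (h1 : (0 : L) < 1) :
    ∃ g : L →+* ℝ, Function.Injective g ∧ ∀ y : ℝ, 0 ≤ y → ∃ a, g a = y := by
  obtain ⟨g, hg, hg1⟩ : ∃ g : L →+ ℝ, StrictMono g ∧ g 1 = 1 := by
    obtain ⟨f, hf⟩ := h.exists_strictMono hhalf h1
    have hf1 : 0 < f 1 := by simpa using hf h1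
    refine ⟨(AddMonoidHom.mulLeft (f 1)⁻¹).comp f, fun a b hab => ?_, ?_⟩
    · exact mul_lt_mul_of_pos_left (hf hab) (inv_pos.mpr hf1)
    · exact inv_mul_cancel₀ hf1.ne'
  have hmono : ∀ a b c : L, 0 ≤ a → b ≤ c → a * b ≤ a * c := by
    intro a b c ha hbc
    obtain ⟨d, rfl⟩ := h.exists_add_eq hhalf h1 hbc
    rw [mul_add]
    exact le_add_of_nonneg_right (hmul a d ha (by simpa using hbc))
  have hgn : ∀ n : ℕ, g (n : L) = n := fun n => by
    rw [← nsmul_one, map_nsmul, hg1, nsmul_one]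
  have hgm : ∀ (n : ℕ) (a : L), g (a * n) = n * g a := fun n a => by
    rw [mul_comm, ← nsmul_eq_mul, map_nsmul, nsmul_eq_mul]
  have hpos : ∀ a b : L, 0 ≤ a → 0 ≤ b → g (a * b) = g a * g b := by
    intro a b ha hb
    have hga : 0 ≤ g a := by simpa using hg.monotone ha
    have hgb : 0 ≤ g b := by simpa using hg.monotone hb
    -- `n |g (a b) - g a g b| ≤ g a` for all `n`, by comparing `n b` with `⌊n g b⌋`
    have hbound : ∀ n : ℕ, n * |g (a * b) - g a * g b| ≤ g a := by
      intro n
      have hlo := Nat.floor_le (mul_nonneg n.cast_nonneg hgb)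
      have hhi := (Nat.lt_floor_add_one ((n : ℝ) * g b)).le
      set m := ⌊(n : ℝ) * g b⌋₊
      have e1 : g (a * (m : L)) ≤ g (a * (b * n)) := hg.monotone <| hmono _ _ _ ha <|
        hg.le_iff_le.mp (by rw [hgn, hgm]; exact hlo)
      have e2 : g (a * (b * n)) ≤ g (a * ((m + 1 : ℕ) : L)) := hg.monotone <| hmono _ _ _ ha <|
        hg.le_iff_le.mp (by rw [hgn, hgm]; push_cast; exact hhi)
      rw [← mul_assoc, hgm, hgm] at e1 e2
      push_cast at e2
      have e3 := mul_le_mul_of_nonneg_left hlo hga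
      have e4 := mul_le_mul_of_nonneg_left hhi hga
      rw [← Nat.abs_cast n, ← abs_mul, abs_le]
      constructor <;> nlinarith
    by_contra hne
    obtain ⟨n, hn⟩ := Archimedean.arch (g a + 1) (abs_pos.mpr (sub_ne_zero.mpr hne))
    rw [nsmul_eq_mul] at hn
    linarith [hbound n]
  have hneg : ∀ a : L, a ≤ 0 → ∃ c, 0 ≤ c ∧ a + c = 0 ∧ g a = - g c := by
    intro a ha
    obtain ⟨c, hc⟩ := h.exists_add_eq hhalf h1 ha
    have hgc : g a + g c = 0 := by rw [← map_add, hc, map_zero]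
    refine ⟨c, ?_, hc, by linarith⟩
    have : g a ≤ 0 := by simpa using hg.monotone ha
    exact hg.le_iff_le.mp (by rw [map_zero]; linarith)
  have hnonneg : ∀ a b : L, 0 ≤ a → g (a * b) = g a * g b := by
    intro a b ha
    rcases le_total 0 b with hb | hb
    · exact hpos a b ha hb
    · obtain ⟨c, hc, hbc, hgc⟩ := hneg b hb
      have h2 : g (a * b) + g (a * c) = 0 := by rw [← map_add, ← mul_add, hbc, mul_zero, map_zero]
      rw [hpos a c ha hc] at h2
      rw [hgc]; linarith
  have hall : ∀ a b : L, g (a * b) = g a * g b := by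
    intro a b
    rcases le_total 0 a with ha | ha
    · exact hnonneg a b ha
    · obtain ⟨c, hc, hac, hgc⟩ := hneg a ha
      have h2 : g (a * b) + g (c * b) = 0 := by rw [← map_add, ← add_mul, hac, zero_mul, map_zero]
      rw [hnonneg c b hc] at h2
      rw [hgc]; linarith
  exact ⟨{ g with map_one' := hg1, map_mul' := hall }, hg.injective,
    fun y hy => h.exists_eq_of_nonneg hhalf h1 g hg hy⟩

/-- The order may be the reverse of the expected one when every element is on the same side of `0`;
passing to the order dual then reduces to `0 < 1`. -/
theorem TranslationComplete.exists_ringHom_real {L : Type*} [CommSemiring L] [Nontrivial L]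
    [LinearOrder L] [IsOrderedCancelAddMonoid L] (h : TranslationComplete L)
    (hhalf : ∀ a : L, ∃ b, b + b = a) (hmul : ∀ a b : L, 0 ≤ a → 0 ≤ b → 0 ≤ a * b) :
    ∃ g : L →+* ℝ, Function.Injective g ∧ ∀ y : ℝ, 0 ≤ y → ∃ a, g a = y := by
  by_cases hδ : ∃ δ : L, 0 < δ
  · obtain ⟨δ, hδ⟩ := hδ
    refine h.exists_ringHom_real_of_one_pos hhalf hmul ?_
    by_contra! hle
    obtain ⟨c, hc⟩ := h.exists_add_eq hhalf hδ hle
    have hc0 : 0 ≤ c := by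
      by_contra! hlt
      have := add_lt_add_of_le_of_lt hle hlt
      rw [hc, add_zero] at this
      exact lt_irrefl _ this
    -- `c = -1`, so `1 = c * c` is nonnegative
    have hcc : c * c = 1 := by
      refine add_right_cancel (b := c) ?_
      calc c * c + c = c * (1 + c) := by ring
        _ = 1 + c := by rw [hc, mul_zero]
    exact one_ne_zero (le_antisymm hle (hcc ▸ hmul c c hc0 hc0))
  · push Not at hδ
    refine TranslationComplete.exists_ringHom_real_of_one_pos (L := Lᵒᵈ) h.dual hhalf
      (fun a b _ _ => hδ (OrderDual.ofDual (a * b))) ?_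
    exact lt_of_le_of_ne (hδ (1 : L)) (fun e => one_ne_zero (α := L) e.symm)

end OrderedSemiring

/-! ### Rings of differences and the embedding into `ℂ` -/

section DifferenceRing

/-- The congruence on formal differences `a + bω`, `ω² = 1`, under which `ω` becomes `-1`. -/
def differenceCon (S : Type*) [CommSemiring S] [IsCancelAdd S] :
    RingCon (QuadraticAlgebra S 1 0) where
  r z w := z.re + w.im = w.re + z.im
  iseqv := ⟨fun _ => rfl, fun h => h.symm, fun {x y z} h1 h2 => by
    have : (x.re + z.im) + (y.re + y.im) = (z.re + x.im) + (y.re + y.im) := by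
      linear_combination h1 + h2
    exact add_right_cancel this⟩
  add' {w x y z} h1 h2 := by
    simp only [QuadraticAlgebra.re_add, QuadraticAlgebra.im_add]
    linear_combination h1 + h2
  mul' {w x y z} h1 h2 := by
    simp only [QuadraticAlgebra.re_mul, QuadraticAlgebra.im_mul]
    refine add_right_cancel (b := x.re * y.im + x.im * y.re + x.re * y.re + x.im * y.im) ?_
    linear_combination y.re * h1 + y.im * h1.symm + x.re * h2 + x.im * h2.symm

/-- A cancellative commutative semiring embeds into its ring of differences. -/
theorem exists_differenceRing (S : Type u) [CommSemiring S] [IsCancelAdd S] :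
    ∃ (R : Type u) (_ : CommRing R) (j : S →+* R), Function.Injective j ∧
      ∀ r, ∃ a b, r = j a - j b := by
  let c := differenceCon S
  have hω : ∀ x : c.Quotient,
      c.mk' ⟨0, 1⟩ * x + x = 0 := by
    intro x
    obtain ⟨z, rfl⟩ := c.mk'_surjective x
    rw [← map_mul, ← map_add, ← map_zero c.mk']
    refine (RingCon.eq c).mpr ?_
    change _ + _ = _ + _
    simp [add_comm]
  let _ : Neg c.Quotient := ⟨fun x => c.mk' ⟨0, 1⟩ * x⟩
  let inst : CommRing c.Quotient :=
    { (inferInstance : CommSemiring c.Quotient) with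
      zsmul := zsmulRec
      neg_add_cancel := hω }
  let j : S →+* c.Quotient := (c.mk' : _ →+* c.Quotient).comp
    (algebraMap S (QuadraticAlgebra S 1 0))
  have hj : ∀ a, j a = c.mk' ⟨a, 0⟩ := fun a => rfl
  refine ⟨c.Quotient, inst, j, ?_, ?_⟩
  · intro a b h
    rw [hj, hj] at h
    have := (RingCon.eq c).mp h
    change a + 0 = b + 0 at this
    simpa using this
  · intro r
    obtain ⟨z, rfl⟩ := c.mk'_surjective r
    refine ⟨z.re, z.im, ?_⟩
    rw [eq_sub_iff_add_eq, hj, hj]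
    change c.mk' _ + c.mk' _ = _
    rw [← map_add]
    refine (RingCon.eq c).mpr ?_
    change _ + _ = _ + _
    simp

/-- Homomorphisms extend along a ring of differences. -/
theorem exists_lift {S R T : Type*} [CommSemiring S] [CommRing R] [CommRing T]
    (j : S →+* R) (hj : Function.Injective j) (hr : ∀ r, ∃ a b, r = j a - j b)
    (f : S →+* T) : ∃ F : R →+* T, ∀ a, F (j a) = f a := by
  choose p q hpq using hr
  have key : ∀ r a b, r = j a - j b → f (p r) - f (q r) = f a - f b := by
    intro r a b h
    have h1 : p r + b = a + q r := hj (by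
      rw [map_add, map_add]; linear_combination h - hpq r)
    have h2 := congrArg f h1
    rw [map_add, map_add] at h2
    linear_combination h2
  refine ⟨RingHom.mk' ⟨⟨fun r => f (p r) - f (q r), ?_⟩, ?_⟩ ?_, ?_⟩
  · rw [key 1 1 0 (by simp)]; simp
  · intro r s
    change f (p (r * s)) - f (q (r * s)) = (f (p r) - f (q r)) * (f (p s) - f (q s))
    rw [key (r * s) (p r * p s + q r * q s) (p r * q s + q r * p s) (by
      conv_lhs => rw [hpq r, hpq s]
      simp only [map_add, map_mul]; ring)]
    simp only [map_add, map_mul]; ring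
  · intro r s
    change f (p (r + s)) - f (q (r + s)) = (f (p r) - f (q r)) + (f (p s) - f (q s))
    rw [key (r + s) (p r + p s) (q r + q s) (by
      conv_lhs => rw [hpq r, hpq s]
      simp only [map_add]; ring)]
    simp only [map_add]; ring
  · intro a
    change f (p (j a)) - f (q (j a)) = f a
    rw [key (j a) a 0 (by simp)]; simp

/-- A commutative domain with an involution whose fixed ring is a copy of `ℝ` embeds, with its
involution, into `ℂ`: each `r` satisfies a real quadratic equation, so the domain is algebraic over
`ℝ`, and the conjugate roots of this equation are the images of `r` and `σ r`. -/
theorem exists_embedding_complex {R : Type*} [CommRing R] [NoZeroDivisors R] [Nontrivial R]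
    (σ : R →+* R) (hσ : ∀ r, σ (σ r) = r) (ι : ℝ →+* R) (hι : ∀ y, σ (ι y) = ι y)
    (hfix : ∀ r, σ r = r → ∃ y, r = ι y) :
    ∃ F : R →+* ℂ, Function.Injective F ∧ ∀ r, F (σ r) = starRingEnd ℂ (F r) := by
  let _ : Algebra ℝ R := ι.toAlgebra
  have : IsDomain R := { }
  have htr : ∀ r, ∃ y, r + σ r = ι y := fun r => hfix _ (by rw [map_add, hσ, add_comm])
  have hnm : ∀ r, ∃ y, r * σ r = ι y := fun r => hfix _ (by rw [map_mul, hσ, mul_comm])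
  have halg : Algebra.IsAlgebraic ℝ R := ⟨fun r => by
    obtain ⟨s, hs⟩ := htr r
    obtain ⟨n, hn⟩ := hnm r
    refine ⟨Polynomial.X ^ 2 + (Polynomial.C (-s) * Polynomial.X + Polynomial.C n),
      (Polynomial.monic_X_pow_add (by compute_degree!)).ne_zero, ?_⟩
    have h1 : algebraMap ℝ R s = ι s := rfl
    have h2 : algebraMap ℝ R n = ι n := rfl
    simp only [map_add, map_mul, map_pow, Polynomial.aeval_X, Polynomial.aeval_C, map_neg, h1, h2,
      ← hs, ← hn]
    ring⟩
  let F : R →ₐ[ℝ] ℂ := IsAlgClosed.lift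
  have hFι : ∀ y, F (ι y) = (y : ℂ) := fun y => F.commutes y
  have hinj : Function.Injective F := by
    rw [injective_iff_map_eq_zero]
    intro r hr
    obtain ⟨n, hn⟩ := hnm r
    have h0 : (n : ℂ) = 0 := by rw [← hFι, ← hn, map_mul, hr, zero_mul]
    rw [Complex.ofReal_eq_zero.mp h0, map_zero] at hn
    rcases mul_eq_zero.mp hn with h | h
    · exact h
    · rw [← hσ r, h, map_zero]
  refine ⟨F, hinj, fun r => ?_⟩
  change F (σ r) = starRingEnd ℂ (F r)
  obtain ⟨s, hs⟩ := htr r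
  obtain ⟨n, hn⟩ := hnm r
  have hs' : F r + F (σ r) = s := by rw [← map_add, hs, hFι]
  have hn' : F r * F (σ r) = n := by rw [← map_mul, hn, hFι]
  by_cases him : (F r).im = 0
  · have hr : r = ι (F r).re := hinj (by
      rw [hFι]; exact Complex.ext (by simp) (by simp [him]))
    have : σ r = r := by rw [hr, hι]
    rw [this]
    exact (Complex.conj_eq_iff_im.mpr him).symm
  · have h1 := congrArg Complex.im hs'
    have h2 := congrArg Complex.im hn'
    simp only [Complex.add_im, Complex.mul_im, Complex.ofReal_im] at h1 h2
    have h3 : (F (σ r)).im = -(F r).im := by linarith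
    refine Complex.ext ?_ (by simpa using h3)
    rw [h3] at h2
    have : (F r).im * ((F (σ r)).re - (F r).re) = 0 := by linarith
    rcases mul_eq_zero.mp this with h | h
    · exact absurd h him
    · rw [Complex.conj_re]; linarith

/-- A semiring whose self-adjoint part embeds into `ℝ`, covering the nonnegative reals, embeds into
`ℂ` with its involution, provided that its ring of differences is a domain. -/
theorem exists_embedding_of_selfAdjoint {S : Type*} [CommSemiring S] [IsCancelAdd S] [Nontrivial S]
    (σ : S →+* S) (hσ : ∀ a, σ (σ a) = a)
    (hdom : ∀ a b c d : S, a * b + c * d = a * d + c * b → a = c ∨ b = d)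
    (g : σ.eqLocusS (RingHom.id S) →+* ℝ) (hg : Function.Injective g)
    (hsurj : ∀ y : ℝ, 0 ≤ y → ∃ a, g a = y) :
    ∃ φ : S →+* ℂ, Function.Injective φ ∧ ∀ a, φ (σ a) = starRingEnd ℂ (φ a) := by
  obtain ⟨R, _, j, hj, hr⟩ := exists_differenceRing S
  have : Nontrivial R := hj.nontrivial
  have : NoZeroDivisors R := ⟨fun {x y} hxy => by
    obtain ⟨a, c, rfl⟩ := hr x
    obtain ⟨b, d, rfl⟩ := hr y
    have h : a * b + c * d = a * d + c * b := hj (by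
      simp only [map_add, map_mul]; linear_combination hxy)
    rcases hdom a b c d h with h | h
    · exact Or.inl (by rw [h, sub_self])
    · exact Or.inr (by rw [h, sub_self])⟩
  obtain ⟨τ, hτ⟩ := exists_lift j hj hr (j.comp σ)
  have hτ' : ∀ a, τ (j a) = j (σ a) := hτ
  have hgr : ∀ y : ℝ, ∃ a b, y = g a - g b := by
    intro y
    obtain ⟨a, ha⟩ := hsurj (max y 0) (le_max_right _ _)
    obtain ⟨b, hb⟩ := hsurj (max (-y) 0) (le_max_right _ _)
    refine ⟨a, b, ?_⟩
    rw [ha, hb, max_zero_sub_max_neg_zero_eq_self]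
  obtain ⟨ι, hι⟩ := exists_lift g hg hgr (j.comp (Subsemiring.subtype _))
  have hι' : ∀ a, ι (g a) = j a := hι
  have hsa : ∀ a, σ a = a → ∃ y, j a = ι y := fun a ha => ⟨g ⟨a, ha⟩, (hι' ⟨a, ha⟩).symm⟩
  obtain ⟨F, hF, hFσ⟩ := exists_embedding_complex τ
    (fun r => by obtain ⟨a, b, rfl⟩ := hr r; simp only [map_sub, hτ', hσ]) ι
    (fun y => by
      obtain ⟨a, b, rfl⟩ := hgr y
      have ha : σ a = a := a.2
      have hb : σ b = b := b.2
      simp only [map_sub, hι', hτ', ha, hb])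
    (fun r hrr => by
      -- `r` is half of its trace, and traces of differences are differences of traces
      obtain ⟨a, b, rfl⟩ := hr r
      obtain ⟨x, hx⟩ := hsa (a + σ a) (by rw [map_add, hσ, add_comm])
      obtain ⟨y, hy⟩ := hsa (b + σ b) (by rw [map_add, hσ, add_comm])
      have h2 : ι (1 / 2) * 2 = 1 := by
        rw [← map_ofNat ι 2, ← map_mul]; norm_num
      refine ⟨1 / 2 * (x - y), ?_⟩
      rw [map_sub, hτ', hτ'] at hrr
      rw [map_mul, map_sub, ← hx, ← hy, map_add, map_add]
      linear_combination (-(j a - j b)) * h2 - ι (1 / 2) * hrr)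
  exact ⟨F.comp j, hF.comp hj, fun a => by
    rw [RingHom.comp_apply, RingHom.comp_apply, ← hτ', hFσ]⟩

end DifferenceRing

/-! ### The embedding of the scalars -/

section Scalars

/-- The algebraic form of the theorem. The relation `le` is an order only on the fixed points
of `σ`, which form the subsemiring `σ.eqLocusS (RingHom.id S)`. -/
theorem exists_embedding_of_complete {S : Type*} [CommSemiring S] [IsCancelAdd S] [Nontrivial S]
    (σ : S →+* S) (hσ : ∀ a, σ (σ a) = a) (hhalf : ∃ x : S, x + x = 1)
    (hdom : ∀ a b c d : S, a * b + c * d = a * d + c * b → a = c ∨ b = d)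
    (le : S → S → Prop)
    (hrefl : ∀ a, σ a = a → le a a)
    (hantisymm : ∀ a b, σ a = a → σ b = b → le a b → le b a → a = b)
    (htrans : ∀ a b c, σ a = a → σ b = b → σ c = c → le a b → le b c → le a c)
    (htotal : ∀ a b, σ a = a → σ b = b → le a b ∨ le b a)
    (hadd : ∀ a b c, σ a = a → σ b = b → σ c = c → le a b → le (a + c) (b + c))
    (hmul : ∀ a b, σ a = a → σ b = b → le 0 a → le 0 b → le 0 (a * b))
    (hsup : ∀ X : Set S, (∀ x ∈ X, σ x = x) → X.Nonempty →
      (∃ b, σ b = b ∧ ∀ x ∈ X, le x b) → ∃ s, IsSupRel (fun a => σ a = a) le X s)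
    (hinf : ∀ X : Set S, (∀ x ∈ X, σ x = x) → X.Nonempty →
      (∃ b, σ b = b ∧ ∀ x ∈ X, le b x) → ∃ s, IsInfRel (fun a => σ a = a) le X s)
    (hsup_add : ∀ (X : Set S) (r s : S), σ r = r → IsSupRel (fun a => σ a = a) le X s →
      IsSupRel (fun a => σ a = a) le ((fun x => x + r) '' X) (s + r))
    (hinf_add : ∀ (X : Set S) (r s : S), σ r = r → IsInfRel (fun a => σ a = a) le X s →
      IsInfRel (fun a => σ a = a) le ((fun x => x + r) '' X) (s + r)) :
    ∃ φ : S →+* ℂ, Function.Injective φ ∧ ∀ a, φ (σ a) = starRingEnd ℂ (φ a) := by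
  classical
  let L := σ.eqLocusS (RingHom.id S)
  have hL : ∀ a : L, σ a = a := fun a => a.2
  let _ : LinearOrder L :=
    { le := fun a b => le a b
      le_refl := fun a => hrefl a (hL a)
      le_trans := fun a b c => htrans a b c (hL a) (hL b) (hL c)
      le_antisymm := fun a b h h' => Subtype.ext (hantisymm a b (hL a) (hL b) h h')
      le_total := fun a b => htotal a b (hL a) (hL b)
      toDecidableLE := Classical.decRel _ }
  have _ : IsCancelAdd L := Subtype.val_injective.isCancelAdd _ fun _ _ => rfl
  have _ : IsOrderedAddMonoid L :=
    { add_le_add_left := fun a b h c => hadd a b c (hL a) (hL b) (hL c) h }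
  have _ : IsOrderedCancelAddMonoid L :=
    { le_of_add_le_add_left := fun a b c h => by
        rcases le_total b c with hbc | hcb
        · exact hbc
        · exact (add_left_cancel (le_antisymm h (by gcongr))).le }
  -- bounds in the order of `L` are bounds for `le` among the self-adjoint elements
  have hlub : ∀ (X : Set L) (s : L),
      IsLUB X s ↔ IsSupRel (fun a => σ a = a) le (Subtype.val '' X) s := by
    intro X s
    constructor
    · intro h
      refine ⟨hL s, ?_, fun b hb hX => @h.2 ⟨b, hb⟩ fun x hx => hX x ⟨x, hx, rfl⟩⟩
      rintro _ ⟨x, hx, rfl⟩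
      exact h.1 hx
    · rintro ⟨-, h1, h2⟩
      refine ⟨fun x hx => h1 x ⟨x, hx, rfl⟩, fun b hb => h2 b (hL b) ?_⟩
      rintro _ ⟨x, hx, rfl⟩
      exact hb hx
  have hglb : ∀ (X : Set L) (s : L),
      IsGLB X s ↔ IsInfRel (fun a => σ a = a) le (Subtype.val '' X) s := by
    intro X s
    constructor
    · intro h
      refine ⟨hL s, ?_, fun b hb hX => @h.2 ⟨b, hb⟩ fun x hx => hX x ⟨x, hx, rfl⟩⟩
      rintro _ ⟨x, hx, rfl⟩
      exact h.1 hx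
    · rintro ⟨-, h1, h2⟩
      refine ⟨fun x hx => h1 x ⟨x, hx, rfl⟩, fun b hb => h2 b (hL b) ?_⟩
      rintro _ ⟨x, hx, rfl⟩
      exact hb hx
  have himg : ∀ (X : Set L) (r : L), (Subtype.val '' ((fun x => x + r) '' X) : Set S) =
      (fun x => x + (r : S)) '' (Subtype.val '' X) := by
    intro X r
    rw [Set.image_image, Set.image_image]
    rfl
  have hcomplete : TranslationComplete L :=
    { sup := by
        rintro X hX ⟨b, hb⟩
        obtain ⟨s, hs⟩ := hsup (Subtype.val '' X) (by rintro _ ⟨x, -, rfl⟩; exact hL x)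
          (hX.image _) ⟨b, hL b, by rintro _ ⟨x, hx, rfl⟩; exact hb hx⟩
        exact ⟨⟨s, hs.1⟩, (hlub X ⟨s, hs.1⟩).mpr hs⟩
      inf := by
        rintro X hX ⟨b, hb⟩
        obtain ⟨s, hs⟩ := hinf (Subtype.val '' X) (by rintro _ ⟨x, -, rfl⟩; exact hL x)
          (hX.image _) ⟨b, hL b, by rintro _ ⟨x, hx, rfl⟩; exact hb hx⟩
        exact ⟨⟨s, hs.1⟩, (hglb X ⟨s, hs.1⟩).mpr hs⟩
      sup_add := fun X r s h => by
        rw [hlub, himg]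
        exact hsup_add _ r s (hL r) ((hlub X s).mp h)
      inf_add := fun X r s h => by
        rw [hglb, himg]
        exact hinf_add _ r s (hL r) ((hglb X s).mp h) }
  obtain ⟨x, hx⟩ := hhalf
  -- `x` is self-adjoint, being the unique solution of `x + x = 1`
  have hxσ : σ x = x := by
    have h1 : σ x + σ x = 1 := by rw [← map_add, hx, map_one]
    calc σ x = σ x * (x + x) := by rw [hx, mul_one]
      _ = x * (σ x + σ x) := by ring
      _ = x := by rw [h1, mul_one]
  have hhalfL : ∀ a : L, ∃ b, b + b = a := fun a => ⟨⟨x, hxσ⟩ * a, Subtype.ext (by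
    change x * (a : S) + x * a = a
    rw [← add_mul, hx, one_mul])⟩
  obtain ⟨g, hg, hsurj⟩ := hcomplete.exists_ringHom_real hhalfL
    (fun a b ha hb => hmul a b (hL a) (hL b) ha hb)
  exact exists_embedding_of_selfAdjoint σ hσ hdom g hg hsurj

end Scalars

/-- Complex numbers from completeness: in a nontrivial monoidal †-category,
enriched in commutative monoids, with simple tensor unit, a zero object, finite
†-biproducts and †-equalizers of all parallel pairs, if the self-adjoint scalars
carry a Dedekind-complete linear order (compatible with addition and
multiplication, with translation-compatible suprema and infima), then the scalars
embed, preserving the involution, into the complex numbers. -/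
theorem stmt18 {C : Type u} [Category.{v} C] [MonoidalCategory C]
    [∀ X Y : C, AddCommMonoid (X ⟶ Y)] [HasZeroObject C]
    (D : DaggerData C) (En : CMonEnriched C)
    (hbp : HasFiniteDagBiproducts D) (heq : HasDagEqualizers D)
    (hsimple : ∀ {X : C} (m : X ⟶ 𝟙_ C), Mono m → m = 0 ∨ IsIso m)
    (hnontriv : (0 : 𝟙_ C ⟶ 𝟙_ C) ≠ 𝟙 (𝟙_ C))
    (le : (𝟙_ C ⟶ 𝟙_ C) → (𝟙_ C ⟶ 𝟙_ C) → Prop)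
    (hrefl : ∀ a, D.dag a = a → le a a)
    (hantisymm : ∀ a b, D.dag a = a → D.dag b = b → le a b → le b a → a = b)
    (htrans : ∀ a b c, D.dag a = a → D.dag b = b → D.dag c = c →
      le a b → le b c → le a c)
    (htotal : ∀ a b, D.dag a = a → D.dag b = b → le a b ∨ le b a)
    (hadd : ∀ a b c, D.dag a = a → D.dag b = b → D.dag c = c →
      le a b → le (a + c) (b + c))
    (hmul : ∀ a b, D.dag a = a → D.dag b = b →
      le 0 a → le 0 b → le 0 (a ≫ b))
    (hsup : ∀ X : Set (𝟙_ C ⟶ 𝟙_ C), (∀ x ∈ X, D.dag x = x) → X.Nonempty →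
      (∃ b, D.dag b = b ∧ ∀ x ∈ X, le x b) →
      ∃ s, IsSupRel (fun a => D.dag a = a) le X s)
    (hinf : ∀ X : Set (𝟙_ C ⟶ 𝟙_ C), (∀ x ∈ X, D.dag x = x) → X.Nonempty →
      (∃ b, D.dag b = b ∧ ∀ x ∈ X, le b x) →
      ∃ s, IsInfRel (fun a => D.dag a = a) le X s)
    (hsup_add : ∀ (X : Set (𝟙_ C ⟶ 𝟙_ C)) (r s : 𝟙_ C ⟶ 𝟙_ C),
      D.dag r = r → IsSupRel (fun a => D.dag a = a) le X s →
      IsSupRel (fun a => D.dag a = a) le ((fun x => x + r) '' X) (s + r))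
    (hinf_add : ∀ (X : Set (𝟙_ C ⟶ 𝟙_ C)) (r s : 𝟙_ C ⟶ 𝟙_ C),
      D.dag r = r → IsInfRel (fun a => D.dag a = a) le X s →
      IsInfRel (fun a => D.dag a = a) le ((fun x => x + r) '' X) (s + r)) :
    ∃ φ : (𝟙_ C ⟶ 𝟙_ C) → ℂ,
      Function.Injective φ ∧
      φ 0 = 0 ∧
      φ (𝟙 (𝟙_ C)) = 1 ∧
      (∀ a b : 𝟙_ C ⟶ 𝟙_ C, φ (a + b) = φ a + φ b) ∧
      (∀ a b : 𝟙_ C ⟶ 𝟙_ C, φ (a ≫ b) = φ a * φ b) ∧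
      (∀ a : 𝟙_ C ⟶ 𝟙_ C, φ (D.dag a) = starRingEnd ℂ (φ a)) := by
  let S := 𝟙_ C ⟶ 𝟙_ C
  let _ : CommSemiring S :=
    { (inferInstance : AddCommMonoid S) with
      mul := fun a b => a ≫ b
      one := 𝟙 (𝟙_ C)
      mul_assoc := fun a b c => Category.assoc a b c
      one_mul := fun a => Category.id_comp a
      mul_one := fun a => Category.comp_id a
      mul_comm := fun a b => scalar_comm a b
      left_distrib := fun a b c => En.comp_add a b c
      right_distrib := fun a b c => En.add_comp a b c
      zero_mul := fun a => En.zero_comp a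
      mul_zero := fun a => En.comp_zero a }
  have _ : IsRightCancelAdd S := ⟨fun c a b h => add_cancel_hom En hbp heq a b c h⟩
  have _ : IsCancelAdd S := AddCommMagma.IsRightCancelAdd.toIsCancelAdd S
  have _ : Nontrivial S := ⟨0, 1, hnontriv⟩
  let σ : S →+* S :=
    { toFun := fun a => D.dag a
      map_one' := D.dag_id _
      map_mul' := fun a b => (D.dag_comp a b).trans (scalar_comm _ _)
      map_zero' := dag_zero En _ _
      map_add' := fun a b => dag_add En hbp a b }
  obtain ⟨φ, hφ, hφσ⟩ := exists_embedding_of_complete σ (fun a => D.dag_dag a)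
    (exists_half En hbp heq (𝟙_ C))
    (fun a b c d h => (scalar_domain En hbp heq hsimple b a d c h).symm)
    le hrefl hantisymm htrans htotal hadd hmul hsup hinf hsup_add hinf_add
  exact ⟨φ, hφ, map_zero φ, map_one φ, map_add φ, map_mul φ, hφσ⟩
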